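/- arXiv:2202.11583 — 2 statements merged into one kernel-verified Lean document; each statement's English description precedes it below -/
import Mathlib

section
/- Let n ≥ 2, let W be a normalized double-well potential, and let η be the optimal transition profile. Define the quadratic form Q(u) = ∫_ℝ ( 2 u'(s)² + W''(η(s)) u(s)² ) ds for u ∈ H¹(ℝ). Then Q(u) ≥ 0 for every u ∈ H¹(ℝ), and Q(u) = 0 if and only if u = t η' for some t ∈ ℝ. -/
noncomputable section

open MeasureTheory Real Set Filter

abbrev En (n : ℕ) : Type := EuclideanSpace ℝ (Fin n)

/-- Volume of the unit ball of `ℝⁿ`. -/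
def ballVol (n : ℕ) : ℝ := (volume (Metric.ball (0 : En n) 1)).toReal

/-- A normalized double-well potential. -/
structure DoubleWell (W : ℝ → ℝ) : Prop where
  contDiffOn : ContDiffOn ℝ 2 W (Icc 0 1)
  lipschitzSecond : ∃ L : NNReal, LipschitzOnWith L (iteratedDerivWithin 2 W (Icc 0 1)) (Icc 0 1)
  zero_at_zero : W 0 = 0
  zero_at_one : W 1 = 0
  pos_on : ∀ t ∈ Ioo (0:ℝ) 1, 0 < W t
  second_pos_zero : 0 < iteratedDerivWithin 2 W (Icc 0 1) 0
  second_pos_one : 0 < iteratedDerivWithin 2 W (Icc 0 1) 1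
  normalized : ∫ t in (0:ℝ)..1, Real.sqrt (W t) = 1

/-- `Φ(t) = ∫₀ᵗ √W`. -/
def Phi (W : ℝ → ℝ) (t : ℝ) : ℝ := ∫ s in (0:ℝ)..t, Real.sqrt (W s)

/-- `V(t) = Φ(t)^{n/(n-1)}`. -/
def Vpot (n : ℕ) (W : ℝ → ℝ) (t : ℝ) : ℝ := Phi W t ^ ((n : ℝ) / ((n : ℝ) - 1))

/-- Membership in `H¹(ℝⁿ;[0,1])`. -/
structure H1Box (n : ℕ) (u : En n → ℝ) : Prop where
  mem_Icc : ∀ x, u x ∈ Icc (0:ℝ) 1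
  diff : Differentiable ℝ u
  memL2 : MemLp u 2 (volume : Measure (En n))
  grad_memL2 : MemLp (fun x => fderiv ℝ u x) 2 (volume : Measure (En n))

/-- The Allen–Cahn energy. -/
def AC (n : ℕ) (W : ℝ → ℝ) (σ : ℝ) (u : En n → ℝ) : ℝ :=
  σ * (∫ x : En n, ‖fderiv ℝ u x‖ ^ 2) + σ⁻¹ * (∫ x : En n, W (u x))

/-- The isoperimetric-type infimum `Ψ(σ,m)`. -/
def Psi (n : ℕ) (W : ℝ → ℝ) (σ m : ℝ) : ℝ :=
  sInf ((fun u => AC n W σ u) ''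
    {u : En n → ℝ | H1Box n u ∧ (∫ x : En n, Vpot n W (u x)) = m})

/-- `u` is a minimizer of `ψ(ε) = Ψ(ε,1)`. -/
def Minimizes (n : ℕ) (W : ℝ → ℝ) (ε : ℝ) (u : En n → ℝ) : Prop :=
  H1Box n u ∧ (∫ x : En n, Vpot n W (u x)) = 1 ∧ AC n W ε u = Psi n W ε 1

/-- Radial function. -/
def Radial (n : ℕ) (u : En n → ℝ) : Prop :=
  ∃ ζ : ℝ → ℝ, ∀ x : En n, u x = ζ ‖x‖

/-- Radial decreasing function. -/
def RadialDecreasing (n : ℕ) (u : En n → ℝ) : Prop :=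
  ∃ ζ : ℝ → ℝ, AntitoneOn ζ (Ici 0) ∧ ∀ x : En n, u x = ζ ‖x‖

/-- The Laplacian as the trace of the second derivative. -/
def lap (n : ℕ) (u : En n → ℝ) (x : En n) : ℝ :=
  ∑ i : Fin n,
    fderiv ℝ (fun y => fderiv ℝ u y (EuclideanSpace.single i 1)) x (EuclideanSpace.single i 1)

/-- The optimal transition profile `η`. -/
structure TransitionProfile (W : ℝ → ℝ) (η : ℝ → ℝ) : Prop where
  mem : ∀ s, η s ∈ Ioo (0:ℝ) 1
  init : η 0 = 1/2
  ode : ∀ s, HasDerivAt η (-(Real.sqrt (W (η s)))) s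
  anti : StrictAnti η
  tendsto_bot : Tendsto η atBot (nhds 1)
  tendsto_top : Tendsto η atTop (nhds 0)

/-- `d_Φ(u,v)`. -/
def dPhi (n : ℕ) (W : ℝ → ℝ) (u v : En n → ℝ) : ℝ :=
  ∫ x : En n, |Phi W (u x) - Phi W (v x)| ^ ((n : ℝ) / ((n : ℝ) - 1))

/-- `R₀ = ω_n^{-1/n}`. -/
def R0 (n : ℕ) : ℝ := ballVol n ^ (-(1:ℝ) / (n : ℝ))

/-- Membership in `H¹(ℝ)`. -/
def H1R (u : ℝ → ℝ) : Prop :=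
  Differentiable ℝ u ∧ MemLp u 2 (volume : Measure ℝ) ∧
    MemLp (deriv u) 2 (volume : Measure ℝ)

/-!
The derivative `η'` has constant sign and solves the linearized equation `2 f'' = W''(η) f`. Hence
its logarithmic derivative `g = η''/η'` solves the Riccati equation `g' = W''(η)/2 - g²`, and
completing the square gives `2 u'² + W''(η) u² = 2 (u' - g u)² + 2 (g u²)'`. A positive solution
of `f'' ≤ K² f` on the whole line satisfies `|f'| ≤ K f`, so `g` is bounded, `g u²` is integrable
and its derivative integrates to zero. Thus `Q(u) = 2 ∫ (u' - g u)²`, which vanishes only if `u/η'`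
has zero derivative almost everywhere.
-/

open scoped Topology

section Calculus

theorem exists_nonpos_of_deriv_le_neg {φ : ℝ → ℝ} {s d : ℝ} (hφ : Differentiable ℝ φ) (hd : 0 < d)
    (hderiv : ∀ x, s ≤ x → deriv φ x ≤ -d) : ∃ x, φ x ≤ 0 := by
  have hle : s ≤ s + |φ s| / d := le_add_of_nonneg_right (by positivity)
  have hdecay : φ (s + |φ s| / d) - φ s ≤ -d * (s + |φ s| / d - s) :=
    (convex_Ici s).image_sub_le_mul_sub_of_deriv_le hφ.continuous.continuousOn
      hφ.differentiableOn (fun x hx => hderiv x (interior_subset hx)) s self_mem_Ici _ hle hle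
  have hdrop : -d * (s + |φ s| / d - s) = -|φ s| := by field_simp; ring
  exact ⟨s + |φ s| / d, by linarith [le_abs_self (φ s)]⟩

theorem eq_of_deriv_ae_eq_zero {E : Type*} [NormedAddCommGroup E] [NormedSpace ℝ E]
    [CompleteSpace E] {φ : ℝ → E} (hφ : Differentiable ℝ φ) (h : deriv φ =ᵐ[volume] 0)
    (x y : ℝ) : φ x = φ y := by
  have hint : Integrable (deriv φ) := (integrable_zero ℝ E volume).congr h.symm
  have hftc : ∫ t in y..x, deriv φ t = φ x - φ y :=
    intervalIntegral.integral_deriv_eq_sub (fun t _ => hφ t) hint.intervalIntegrable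
  rw [intervalIntegral.integral_zero_ae (h.mono fun t ht _ => ht)] at hftc
  exact sub_eq_zero.1 hftc.symm

theorem exists_eq_const_mul_of_deriv_ae_eq_logDeriv_mul {f u : ℝ → ℝ} (hf : Differentiable ℝ f)
    (hf0 : ∀ s, f s ≠ 0) (hu : Differentiable ℝ u)
    (h : ∀ᵐ s, deriv u s = logDeriv f s * u s) : ∃ t : ℝ, u = fun s => t * f s := by
  have hquot : deriv (fun s => u s / f s) =ᵐ[volume] 0 := by
    filter_upwards [h] with s hs
    rw [deriv_fun_div (hu s) (hf s) (hf0 s), hs, logDeriv_apply]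
    have := hf0 s
    simp only [Pi.zero_apply]
    field_simp
    ring
  refine ⟨u 0 / f 0, funext fun s => ?_⟩
  rw [eq_of_deriv_ae_eq_zero (hu.fun_div hf hf0) hquot 0 s, div_mul_cancel₀ _ (hf0 s)]

theorem hasDerivAt_iteratedDerivWithin {W : ℝ → ℝ} {S : Set ℝ} {n : WithTop ℕ∞} {k : ℕ} {t : ℝ}
    (hW : ContDiffOn ℝ n W S) (hk : k < n) (hS : UniqueDiffOn ℝ S) (ht : S ∈ 𝓝 t) :
    HasDerivAt (iteratedDerivWithin k W S) (iteratedDerivWithin (k + 1) W S t) t := by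
  rw [iteratedDerivWithin_succ]
  exact (hW.differentiableOn_iteratedDerivWithin hk hS t
    (mem_of_mem_nhds ht)).hasDerivWithinAt.hasDerivAt ht

end Calculus

section LogDerivBound

variable {f f' f'' : ℝ → ℝ} {K : ℝ}

theorem antitone_deriv_add_mul_mul_exp (hf : ∀ s, HasDerivAt f (f' s) s)
    (hf' : ∀ s, HasDerivAt f' (f'' s) s) (hle : ∀ s, f'' s ≤ K ^ 2 * f s) :
    Antitone fun x => (f' x + K * f x) * exp (-K * x) := by
  have hderiv (x : ℝ) : HasDerivAt (fun x => (f' x + K * f x) * exp (-K * x))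
      ((f'' x - K ^ 2 * f x) * exp (-K * x)) x :=
    (((hf' x).fun_add ((hf x).const_mul K)).fun_mul
      ((hasDerivAt_id' x).const_mul (-K)).exp).congr_deriv (by ring)
  exact antitone_of_hasDerivAt_nonpos hderiv fun x =>
    mul_nonpos_of_nonpos_of_nonneg (sub_nonpos.2 (hle x)) (exp_pos _).le

/-- If `f' + K f` were negative at `s`, then `(f e^{Kx})' = (f' + K f) e^{-Kx} e^{2Kx}` would stay
below a negative constant on `[s, ∞)`, and `f` would eventually fail to be positive. -/
theorem neg_mul_le_deriv_of_deriv2_le (hK : 0 ≤ K) (hpos : ∀ s, 0 < f s)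
    (hf : ∀ s, HasDerivAt f (f' s) s) (hf' : ∀ s, HasDerivAt f' (f'' s) s)
    (hle : ∀ s, f'' s ≤ K ^ 2 * f s) (s : ℝ) : -(K * f s) ≤ f' s := by
  by_contra! hlt
  set k : ℝ → ℝ := fun x => (f' x + K * f x) * exp (-K * x) with hk
  have hks : k s < 0 := mul_neg_of_neg_of_pos (by linarith) (exp_pos _)
  have hderiv (x : ℝ) : HasDerivAt (fun x => f x * exp (K * x)) (k x * exp (2 * K * x)) x := by
    refine ((hf x).fun_mul ((hasDerivAt_id' x).const_mul K).exp).congr_deriv ?_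
    have hexp : exp (K * x) = exp (-K * x) * exp (2 * K * x) := by rw [← exp_add]; ring_nf
    simp only [hk, hexp]
    ring
  have hslope (x : ℝ) (hx : s ≤ x) :
      deriv (fun x => f x * exp (K * x)) x ≤ -(-k s * exp (2 * K * s)) :=
    calc deriv (fun x => f x * exp (K * x)) x = k x * exp (2 * K * x) := (hderiv x).deriv
      _ ≤ k s * exp (2 * K * x) := by
        gcongr
        exact antitone_deriv_add_mul_mul_exp hf hf' hle hx
      _ ≤ k s * exp (2 * K * s) := mul_le_mul_of_nonpos_left (by gcongr) hks.le
      _ = -(-k s * exp (2 * K * s)) := by ring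
  obtain ⟨x, hx⟩ := exists_nonpos_of_deriv_le_neg (fun x => (hderiv x).differentiableAt)
    (mul_pos (neg_pos.2 hks) (exp_pos _)) hslope
  exact hx.not_gt (mul_pos (hpos x) (exp_pos _))

theorem abs_deriv_le_mul_of_deriv2_le (hK : 0 ≤ K) (hpos : ∀ s, 0 < f s)
    (hf : ∀ s, HasDerivAt f (f' s) s) (hf' : ∀ s, HasDerivAt f' (f'' s) s)
    (hle : ∀ s, f'' s ≤ K ^ 2 * f s) (s : ℝ) : |f' s| ≤ K * f s := by
  have hreflected : -(K * f (- -s)) ≤ -f' (- -s) :=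
    neg_mul_le_deriv_of_deriv2_le (f := fun x => f (-x)) (f' := fun x => -f' (-x))
      (f'' := fun x => f'' (-x)) hK (fun x => hpos (-x))
      (fun x => ((hf (-x)).comp x (hasDerivAt_neg x)).congr_deriv (by ring))
      (fun x => ((hf' (-x)).comp x (hasDerivAt_neg x)).neg.congr_deriv (by ring))
      (fun x => hle (-x)) (-s)
  rw [neg_neg, neg_le_neg_iff] at hreflected
  exact abs_le.2 ⟨neg_mul_le_deriv_of_deriv2_le hK hpos hf hf' hle s, hreflected⟩

end LogDerivBound

section SchrodingerForm

/-- The quadratic form `∫ (2 u'² + q u²)` of the Schrödinger operator `-2 d²/ds² + q` on the line.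
For `q = W''(η)` it is the second variation `Q` of the Allen–Cahn energy at the profile `η`. The
value is meaningful only when the integrand is integrable, as it is for `u ∈ H¹(ℝ)` and bounded
measurable `q`. -/
def schrodingerForm (q u : ℝ → ℝ) : ℝ := ∫ s, (2 * deriv u s ^ 2 + q s * u s ^ 2)

/-- `f` is a positive solution on the line of the Jacobi equation `2 f'' = q f`, the Euler–Lagrange
equation of `schrodingerForm q`; `f` need not belong to `H¹(ℝ)`. -/
structure IsPositiveJacobiField (q f : ℝ → ℝ) : Prop where
  pos : ∀ s, 0 < f s
  differentiable : Differentiable ℝ f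
  hasDerivAt_deriv : ∀ s, HasDerivAt (deriv f) (q s / 2 * f s) s

theorem integrable_sq_deriv_sub_mul {g u : ℝ → ℝ} {K : ℝ} (hg : AEStronglyMeasurable g)
    (hgK : ∀ s, |g s| ≤ K) (hu : H1R u) : Integrable fun s => (deriv u s - g s * u s) ^ 2 := by
  obtain ⟨-, hu2, hu'2⟩ := hu
  have hgu : MemLp (fun s => g s * u s) 2 :=
    hu2.of_le_mul (hg.mul hu2.aestronglyMeasurable) <| ae_of_all _ fun s => by
      rw [norm_mul]
      exact mul_le_mul_of_nonneg_right (hgK s) (norm_nonneg _)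
  exact (hu'2.sub hgu).integrable_sq

theorem measurable_of_hasDerivAt_riccati {q g : ℝ → ℝ}
    (hg : ∀ s, HasDerivAt g (q s / 2 - g s ^ 2) s) : Measurable q := by
  have hgm : Measurable g := (Differentiable.continuous fun s => (hg s).differentiableAt).measurable
  have hq : q = fun s => 2 * (deriv g s + g s ^ 2) := funext fun s => by
    rw [(hg s).deriv]
    ring
  rw [hq]
  exact ((measurable_deriv g).add (hgm.pow_const 2)).const_mul 2

theorem schrodingerForm_eq_two_mul_integral_sq {q g u : ℝ → ℝ} {C K : ℝ}
    (hqC : ∀ s, |q s| ≤ C) (hg : ∀ s, HasDerivAt g (q s / 2 - g s ^ 2) s)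
    (hgK : ∀ s, |g s| ≤ K) (hu : H1R u) :
    schrodingerForm q u = 2 * ∫ s, (deriv u s - g s * u s) ^ 2 := by
  have ⟨hud, hu2, hu'2⟩ := hu
  have hgm : AEStronglyMeasurable g :=
    (Differentiable.continuous fun s => (hg s).differentiableAt).aestronglyMeasurable
  have hform : Integrable fun s => 2 * deriv u s ^ 2 + q s * u s ^ 2 :=
    (hu'2.integrable_sq.const_mul 2).add <| hu2.integrable_sq.bdd_mul
      (measurable_of_hasDerivAt_riccati hg).aestronglyMeasurable (ae_of_all _ hqC)
  have hsquare : Integrable fun s => (deriv u s - g s * u s) ^ 2 :=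
    integrable_sq_deriv_sub_mul hgm hgK hu
  have hboundary : Integrable fun s => g s * u s ^ 2 :=
    hu2.integrable_sq.bdd_mul hgm (ae_of_all _ hgK)
  have hderiv (s : ℝ) : HasDerivAt (fun s => g s * u s ^ 2)
      ((2 * deriv u s ^ 2 + q s * u s ^ 2) / 2 - (deriv u s - g s * u s) ^ 2) s := by
    refine ((hg s).fun_mul ((hud s).hasDerivAt.fun_pow 2)).congr_deriv ?_
    push_cast
    ring
  have hzero := integral_eq_zero_of_hasDerivAt_of_integrable hderiv
    ((hform.div_const 2).sub hsquare) hboundary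
  rw [integral_sub (hform.div_const 2) hsquare, integral_div] at hzero
  rw [schrodingerForm]
  linarith

namespace IsPositiveJacobiField

variable {q f u : ℝ → ℝ} {C : ℝ}

theorem hasDerivAt_logDeriv (hf : IsPositiveJacobiField q f) (s : ℝ) :
    HasDerivAt (logDeriv f) (q s / 2 - logDeriv f s ^ 2) s := by
  have hf0 := (hf.pos s).ne'
  refine ((hf.hasDerivAt_deriv s).div (hf.differentiable s).hasDerivAt hf0).congr_deriv ?_
  rw [logDeriv_apply]
  field_simp

theorem abs_logDeriv_le_sqrt (hf : IsPositiveJacobiField q f) (hqC : ∀ s, |q s| ≤ C) (s : ℝ) :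
    |logDeriv f s| ≤ √(C / 2) := by
  have hC : 0 ≤ C := (abs_nonneg _).trans (hqC 0)
  have hle (x : ℝ) : q x / 2 * f x ≤ √(C / 2) ^ 2 * f x := by
    rw [sq_sqrt (by positivity)]
    exact mul_le_mul_of_nonneg_right (by linarith [le_of_abs_le (hqC x)]) (hf.pos x).le
  rw [logDeriv_apply, abs_div, abs_of_pos (hf.pos s), div_le_iff₀ (hf.pos s)]
  exact abs_deriv_le_mul_of_deriv2_le (sqrt_nonneg _) hf.pos
    (fun x => (hf.differentiable x).hasDerivAt) hf.hasDerivAt_deriv hle s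

theorem schrodingerForm_eq (hf : IsPositiveJacobiField q f) (hqC : ∀ s, |q s| ≤ C) (hu : H1R u) :
    schrodingerForm q u = 2 * ∫ s, (deriv u s - logDeriv f s * u s) ^ 2 :=
  schrodingerForm_eq_two_mul_integral_sq hqC hf.hasDerivAt_logDeriv (hf.abs_logDeriv_le_sqrt hqC) hu

theorem schrodingerForm_nonneg (hf : IsPositiveJacobiField q f) (hqC : ∀ s, |q s| ≤ C)
    (hu : H1R u) : 0 ≤ schrodingerForm q u := by
  rw [hf.schrodingerForm_eq hqC hu]
  exact mul_nonneg zero_le_two (integral_nonneg fun s => sq_nonneg _)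

theorem schrodingerForm_eq_zero_iff (hf : IsPositiveJacobiField q f) (hqC : ∀ s, |q s| ≤ C)
    (hu : H1R u) : schrodingerForm q u = 0 ↔ ∃ t : ℝ, u = fun s => t * f s := by
  have hg : Continuous (logDeriv f) :=
    Differentiable.continuous fun s => (hf.hasDerivAt_logDeriv s).differentiableAt
  have hsquare := integrable_sq_deriv_sub_mul hg.aestronglyMeasurable
    (hf.abs_logDeriv_le_sqrt hqC) hu
  rw [hf.schrodingerForm_eq hqC hu, mul_eq_zero_iff_left two_ne_zero,
    integral_eq_zero_iff_of_nonneg (fun s => sq_nonneg _) hsquare]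
  constructor
  · intro hzero
    refine exists_eq_const_mul_of_deriv_ae_eq_logDeriv_mul hf.differentiable
      (fun s => (hf.pos s).ne') hu.1 ?_
    filter_upwards [hzero] with s hs
    exact sub_eq_zero.1 (pow_eq_zero_iff two_ne_zero |>.1 hs)
  · rintro ⟨t, rfl⟩
    refine ae_of_all _ fun s => ?_
    have hf0 := (hf.pos s).ne'
    simp only [deriv_const_mul_field, logDeriv_apply, Pi.zero_apply]
    field_simp
    ring

end IsPositiveJacobiField

end SchrodingerForm

section TransitionProfile

variable {W η : ℝ → ℝ} {a b : ℝ}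

theorem deriv_profile_neg (hpos : ∀ t ∈ Ioo a b, 0 < W t) (hmem : ∀ s, η s ∈ Ioo a b)
    (hode : ∀ s, HasDerivAt η (-√(W (η s))) s) (s : ℝ) : deriv η s < 0 := by
  rw [(hode s).deriv]
  exact neg_neg_of_pos (sqrt_pos.2 (hpos _ (hmem s)))

theorem hasDerivAt_deriv_profile {w : ℝ → ℝ} (hW : ∀ t ∈ Ioo a b, HasDerivAt W (w t) t)
    (hpos : ∀ t ∈ Ioo a b, 0 < W t) (hmem : ∀ s, η s ∈ Ioo a b)
    (hode : ∀ s, HasDerivAt η (-√(W (η s))) s) (s : ℝ) :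
    HasDerivAt (deriv η) (w (η s) / 2) s := by
  have hWη := hpos _ (hmem s)
  have hsqrt := (sqrt_pos.2 hWη).ne'
  rw [show deriv η = fun s => -√(W (η s)) from funext fun s => (hode s).deriv]
  refine (((hW _ (hmem s)).comp s (hode s)).sqrt hWη.ne').fun_neg.congr_deriv ?_
  simp only [Function.comp_apply]
  field_simp

theorem isPositiveJacobiField_neg_deriv_profile (hW : ContDiffOn ℝ 2 W (Icc a b))
    (hpos : ∀ t ∈ Ioo a b, 0 < W t) (hmem : ∀ s, η s ∈ Ioo a b)
    (hode : ∀ s, HasDerivAt η (-√(W (η s))) s) :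
    IsPositiveJacobiField (fun s => iteratedDerivWithin 2 W (Icc a b) (η s))
      (fun s => -deriv η s) := by
  have hS : UniqueDiffOn ℝ (Icc a b) := uniqueDiffOn_Icc ((hmem 0).1.trans (hmem 0).2)
  have hW' (t : ℝ) (ht : t ∈ Ioo a b) : HasDerivAt W (iteratedDerivWithin 1 W (Icc a b) t) t := by
    simpa only [iteratedDerivWithin_zero] using
      hasDerivAt_iteratedDerivWithin (k := 0) hW (by norm_num) hS (Icc_mem_nhds ht.1 ht.2)
  have hη' := hasDerivAt_deriv_profile hW' hpos hmem hode
  refine ⟨fun s => neg_pos.2 (deriv_profile_neg hpos hmem hode s),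
    fun s => (hη' s).fun_neg.differentiableAt, fun s => ?_⟩
  have hW'' : HasDerivAt (iteratedDerivWithin 1 W (Icc a b))
      (iteratedDerivWithin 2 W (Icc a b) (η s)) (η s) :=
    hasDerivAt_iteratedDerivWithin hW (by norm_num) hS (Icc_mem_nhds (hmem s).1 (hmem s).2)
  rw [show deriv (fun s => -deriv η s) = fun s => -(iteratedDerivWithin 1 W (Icc a b) (η s) / 2)
    from funext fun s => (hη' s).fun_neg.deriv]
  refine ((hW''.comp s (hode s)).div_const 2).fun_neg.congr_deriv ?_
  rw [(hode s).deriv]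
  ring

theorem statement5_general (hW : ContDiffOn ℝ 2 W (Icc a b)) (hpos : ∀ t ∈ Ioo a b, 0 < W t)
    (hmem : ∀ s, η s ∈ Ioo a b) (hode : ∀ s, HasDerivAt η (-√(W (η s))) s) :
    (∀ u : ℝ → ℝ, H1R u →
      0 ≤ schrodingerForm (fun s => iteratedDerivWithin 2 W (Icc a b) (η s)) u) ∧
    (∀ u : ℝ → ℝ, H1R u →
      (schrodingerForm (fun s => iteratedDerivWithin 2 W (Icc a b) (η s)) u = 0 ↔
        ∃ t : ℝ, u = fun s => t * deriv η s)) := by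
  have hjacobi := isPositiveJacobiField_neg_deriv_profile hW hpos hmem hode
  obtain ⟨C, hC⟩ := isCompact_Icc.exists_bound_of_continuousOn <|
    hW.continuousOn_iteratedDerivWithin le_rfl (uniqueDiffOn_Icc ((hmem 0).1.trans (hmem 0).2))
  have hbound (s : ℝ) : |iteratedDerivWithin 2 W (Icc a b) (η s)| ≤ C :=
    hC _ (Ioo_subset_Icc_self (hmem s))
  refine ⟨fun u hu => hjacobi.schrodingerForm_nonneg hbound hu, fun u hu => ?_⟩
  rw [hjacobi.schrodingerForm_eq_zero_iff hbound hu, neg_surjective.exists]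
  simp only [neg_mul_neg]

end TransitionProfile

theorem statement5 (n : ℕ) (hn : 2 ≤ n) (W : ℝ → ℝ) (hW : DoubleWell W)
    (η : ℝ → ℝ) (hη : TransitionProfile W η) (hη' : H1R (deriv η)) :
    (∀ u : ℝ → ℝ, H1R u →
      0 ≤ ∫ s : ℝ, (2 * deriv u s ^ 2 + iteratedDerivWithin 2 W (Icc 0 1) (η s) * u s ^ 2)) ∧
    (∀ u : ℝ → ℝ, H1R u →
      ((∫ s : ℝ, (2 * deriv u s ^ 2 + iteratedDerivWithin 2 W (Icc 0 1) (η s) * u s ^ 2)) = 0 ↔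
        ∃ t : ℝ, u = fun s => t * deriv η s)) :=
  statement5_general hW.contDiffOn hW.pos_on hη.mem hη.ode
end
end

section
/- Let n ≥ 2, let W be a normalized double-well potential with associated V, let η be the optimal transition profile, and set R₀ = ω_n^{-1/n}, τ₀ = ∫_ℝ η'(s) V'(η(s)) s ds and τ₁ = ∫_ℝ W(η(s)) s ds. There exist universal constants ε₀ > 0 and C such that: for every ε ∈ (0,ε₀) there exists a unique τ_ε ∈ ℝ such that the function z_ε(x) = η((|x|−R₀)/ε − τ_ε) satisfies ∫_{ℝⁿ} V(z_ε) dx = 1; moreover |τ_ε − τ₀| ≤ C ε and | AC_ε(z_ε) − 2 n ω_n^{1/n} − 2 n (n−1) ω_n^{2/n} (τ₀+τ₁) ε | ≤ C ε². -/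
noncomputable section

open MeasureTheory Real Set Filter

/-!
Since `W ∘ η = -(Φ ∘ η)'` and `η'² = W ∘ η`, slicing space into spheres and balls writes both the
volume and the energy of the ansatz as truncated moments `∫ (R₀ + ε (s + τ))₊ ^ m * h s ds` of a
probability density: `h = -(V ∘ η)'` with `m = n` for the volume, `h = W ∘ η` with `m = n - 1` for
the energy. Nondegeneracy of the wells makes `η (1 - η)`, hence `h`, decay exponentially, so such a
moment equals `R₀ ^ m + m R₀ ^ (m - 1) ε (∫ h s * s ds + τ) + O(ε²)`. It is also continuous and
strictly increasing in `τ`, so the volume constraint has exactly one solution, located at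
`τ₀ + O(ε)` by the expansion with `m = n`; the expansion with `m = n - 1` then gives the energy.
-/

section Preliminaries

lemma exists_pos_forall_mul_le_of_isCompact {X : Type*} [TopologicalSpace X] {K : Set X}
    (hK : IsCompact K) {f g : X → ℝ} (hg : ∀ x, 0 ≤ g x)
    (hloc : ∀ x ∈ K, ∃ a > 0, ∀ᶠ t in nhdsWithin x K, a * g t ≤ f t) :
    ∃ a > 0, ∀ t ∈ K, a * g t ≤ f t := by
  refine hK.induction_on (p := fun s => ∃ a > 0, ∀ t ∈ s, a * g t ≤ f t)
    ⟨1, one_pos, by simp⟩ ?_ ?_ ?_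
  · rintro s t hst ⟨a, ha, h⟩
    exact ⟨a, ha, fun x hx => h x (hst hx)⟩
  · rintro s t ⟨a, ha, hs⟩ ⟨b, hb, ht⟩
    refine ⟨min a b, lt_min ha hb, ?_⟩
    rintro x (hx | hx)
    · exact (mul_le_mul_of_nonneg_right (min_le_left a b) (hg x)).trans (hs x hx)
    · exact (mul_le_mul_of_nonneg_right (min_le_right a b) (hg x)).trans (ht x hx)
  · intro x hx
    obtain ⟨a, ha, h⟩ := hloc x hx
    exact ⟨_, h, a, ha, fun t ht => ht⟩

lemma derivWithin_mul_sub_nonneg_of_isLocalMinOn {f : ℝ → ℝ} {s : Set ℝ} (hs : Convex ℝ s)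
    {x₀ t : ℝ} (hx₀ : x₀ ∈ s) (ht : t ∈ s) (hf : DifferentiableWithinAt ℝ f s x₀)
    (hmin : IsLocalMinOn f s x₀) : 0 ≤ derivWithin f s x₀ * (t - x₀) := by
  have hnonneg := hmin.hasFDerivWithinAt_nonneg hf.hasDerivWithinAt.hasFDerivWithinAt
    (sub_mem_posTangentConeAt_of_segment_subset (hs.segment_subset hx₀ ht))
  simpa [mul_comm] using hnonneg

lemma exists_eventually_add_mul_sq_le_of_isLocalMinOn {f : ℝ → ℝ} {s : Set ℝ} (hs : Convex ℝ s)
    (hf : ContDiffOn ℝ 2 f s) {x₀ : ℝ} (hx₀ : x₀ ∈ s) (hmin : IsLocalMinOn f s x₀)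
    (hpos : 0 < iteratedDerivWithin 2 f s x₀) :
    ∃ a > 0, ∀ᶠ t in nhdsWithin x₀ s, f x₀ + a * (t - x₀) ^ 2 ≤ f t := by
  refine ⟨iteratedDerivWithin 2 f s x₀ / 4, by positivity, ?_⟩
  filter_upwards [(taylor_isLittleO hs hx₀ hf).def (by positivity :
    0 < iteratedDerivWithin 2 f s x₀ / 4), self_mem_nhdsWithin] with t htaylor ht
  have hslope := derivWithin_mul_sub_nonneg_of_isLocalMinOn hs hx₀ ht
    (hf.differentiableOn (by norm_num) x₀ hx₀) hmin
  rw [taylorWithinEval_succ, taylorWithinEval_succ, taylor_within_zero_eval, Real.norm_eq_abs,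
    Real.norm_of_nonneg (sq_nonneg (t - x₀))] at htaylor
  have hlower := (abs_le.1 htaylor).1
  norm_num at hlower
  linarith

lemma max_zero_pow_succ (r : ℝ) {m : ℕ} (hm : 1 ≤ m) :
    max r 0 ^ (m + 1) = r * max r 0 ^ m := by
  rcases le_total 0 r with hr | hr
  · rw [max_eq_left hr, pow_succ']
  · rw [max_eq_right hr, zero_pow (by omega), zero_pow (by omega), mul_zero]

lemma abs_max_zero_sub_le_sq_div {R : ℝ} (hR : 0 < R) (y : ℝ) :
    |max (R + y) 0 - (R + y)| ≤ y ^ 2 / R := by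
  rw [le_div_iff₀ hR]
  rcases le_total 0 (R + y) with hy | hy
  · rw [max_eq_left hy, sub_self, abs_zero, zero_mul]
    positivity
  · rw [max_eq_right hy, abs_of_nonneg (by linarith)]
    nlinarith

-- By `max_zero_pow_succ` the truncated power satisfies the same recursion as the polynomial
-- `(R + y) ^ m`, so truncation only matters at `m = 1`.
lemma exists_abs_max_zero_pow_sub_taylor_le {R : ℝ} (hR : 0 < R) {m : ℕ} (hm : 1 ≤ m) :
    ∃ K ≥ 0, ∀ y : ℝ,
      |max (R + y) 0 ^ m - R ^ m - m * R ^ (m - 1) * y| ≤ K * (y ^ 2 * (1 + |y|) ^ m) := by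
  induction m, hm using Nat.le_induction with
  | base =>
    refine ⟨R⁻¹, by positivity, fun y => ?_⟩
    calc |max (R + y) 0 ^ 1 - R ^ 1 - (1 : ℕ) * R ^ (1 - 1) * y|
        = |max (R + y) 0 - (R + y)| := by norm_num [sub_sub]
      _ ≤ y ^ 2 / R := abs_max_zero_sub_le_sq_div hR y
      _ = R⁻¹ * (y ^ 2 * 1) := by ring
      _ ≤ R⁻¹ * (y ^ 2 * (1 + |y|) ^ 1) := by
          gcongr
          linarith [abs_nonneg y]
  | succ m hm ih =>
    obtain ⟨K, hK, ih⟩ := ih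
    refine ⟨(R + 1) * K + m * R ^ (m - 1), by positivity, fun y => ?_⟩
    have hrec : max (R + y) 0 ^ (m + 1) - R ^ (m + 1) - (m + 1 : ℕ) * R ^ (m + 1 - 1) * y =
        (R + y) * (max (R + y) 0 ^ m - R ^ m - m * R ^ (m - 1) * y)
          + m * R ^ (m - 1) * y ^ 2 := by
      obtain ⟨k, rfl⟩ := Nat.exists_eq_add_of_le' hm
      rw [max_zero_pow_succ _ hm, Nat.add_sub_cancel, Nat.add_sub_cancel]
      push_cast
      ring
    have hfactor : |R + y| ≤ (R + 1) * (1 + |y|) := by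
      rw [abs_le]
      constructor <;> nlinarith [neg_abs_le y, le_abs_self y, abs_nonneg y]
    have hone : 1 ≤ (1 + |y|) ^ (m + 1) := one_le_pow₀ (by linarith [abs_nonneg y])
    calc |max (R + y) 0 ^ (m + 1) - R ^ (m + 1) - (m + 1 : ℕ) * R ^ (m + 1 - 1) * y|
        ≤ |R + y| * |max (R + y) 0 ^ m - R ^ m - m * R ^ (m - 1) * y|
          + m * R ^ (m - 1) * y ^ 2 := by
          rw [hrec, ← abs_mul]
          exact (abs_add_le _ _).trans_eq (by rw [abs_of_nonneg (a := _ * y ^ 2) (by positivity)])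
      _ ≤ (R + 1) * (1 + |y|) * (K * (y ^ 2 * (1 + |y|) ^ m))
          + m * R ^ (m - 1) * (y ^ 2 * (1 + |y|) ^ (m + 1)) := by
          gcongr
          · exact ih y
          · exact le_mul_of_one_le_right (sq_nonneg y) hone
      _ = ((R + 1) * K + m * R ^ (m - 1)) * (y ^ 2 * (1 + |y|) ^ (m + 1)) := by ring

lemma abs_max_zero_pow_le {τ T : ℝ} (hτ : |τ| ≤ T) (R ε : ℝ) (m : ℕ) (s : ℝ) :
    |max (R + ε * (s + τ)) 0 ^ m| ≤ (|R| + |ε| * (1 + T)) ^ m * (1 + |s|) ^ m := by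
  have hT : 0 ≤ T := (abs_nonneg τ).trans hτ
  have hsum : |s + τ| ≤ (1 + T) * (1 + |s|) :=
    (abs_add_le s τ).trans (by nlinarith [abs_nonneg s])
  rw [← mul_pow, abs_of_nonneg (by positivity)]
  gcongr
  refine max_le ?_ (by positivity)
  calc R + ε * (s + τ) ≤ |R| + |ε| * |s + τ| := by
        rw [← abs_mul]
        exact add_le_add (le_abs_self _) (le_abs_self _)
    _ ≤ |R| * (1 + |s|) + |ε| * ((1 + T) * (1 + |s|)) := by
        gcongr
        exact le_mul_of_one_le_right (abs_nonneg R) (by linarith [abs_nonneg s])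
    _ = (|R| + |ε| * (1 + T)) * (1 + |s|) := by ring

lemma exists_abs_max_zero_pow_rescaled_sub_taylor_le {R : ℝ} (hR : 0 < R) {m : ℕ} (hm : 1 ≤ m)
    (T : ℝ) : ∃ K ≥ 0, ∀ ε τ s : ℝ, 0 < ε → ε ≤ 1 → |τ| ≤ T →
      |max (R + ε * (s + τ)) 0 ^ m - R ^ m - m * R ^ (m - 1) * (ε * (s + τ))|
        ≤ K * ε ^ 2 * (1 + |s|) ^ (m + 2) := by
  obtain ⟨K, hK, htaylor⟩ := exists_abs_max_zero_pow_sub_taylor_le hR hm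
  refine ⟨K * |1 + T| ^ (m + 2), by positivity, fun ε τ s hε hε1 hτ => ?_⟩
  have hT : 0 ≤ T := (abs_nonneg τ).trans hτ
  have hsum : 1 + |s + τ| ≤ (1 + T) * (1 + |s|) := by
    nlinarith [abs_add_le s τ, abs_nonneg s]
  have hscaled : |ε * (s + τ)| ≤ |s + τ| := by
    rw [abs_mul, abs_of_pos hε]
    exact mul_le_of_le_one_left (abs_nonneg _) hε1
  calc _ ≤ K * ((ε * (s + τ)) ^ 2 * (1 + |ε * (s + τ)|) ^ m) := htaylor _
    _ = K * (ε ^ 2 * |s + τ| ^ 2 * (1 + |ε * (s + τ)|) ^ m) := by rw [mul_pow, sq_abs]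
    _ ≤ K * (ε ^ 2 * ((1 + T) * (1 + |s|)) ^ 2 * ((1 + T) * (1 + |s|)) ^ m) := by
        gcongr <;> linarith
    _ = K * |1 + T| ^ (m + 2) * ε ^ 2 * (1 + |s|) ^ (m + 2) := by
        rw [abs_of_nonneg (by positivity : 0 ≤ 1 + T)]
        simp only [mul_pow]
        ring

lemma integrable_exp_neg_mul_abs {c : ℝ} (hc : 0 < c) :
    Integrable fun s : ℝ => exp (-(c * |s|)) := by
  have hnorm := integrable_fun_norm_addHaar (E := ℝ) volume (f := fun r => exp (-(c * r)))
  simpa [neg_mul] using hnorm.2 (by simpa using integrableOn_exp_mul_Ioi (neg_neg_of_pos hc) 0)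

lemma integrable_one_add_abs_pow_mul_exp_neg_mul_abs {c : ℝ} (hc : 0 < c) (k : ℕ) :
    Integrable fun s : ℝ => (1 + |s|) ^ k * exp (-(c * |s|)) := by
  have hexp : ∀ b : ℝ, b < 0 → Integrable fun s : ℝ => exp (b * (1 + |s|)) := fun b hb => by
    refine ((integrable_exp_neg_mul_abs (neg_pos.2 hb)).const_mul (exp b)).congr
      (Eventually.of_forall fun s => ?_)
    simp only [← Real.exp_add]
    congr 1
    ring
  have hpow := ProbabilityTheory.integrable_pow_abs_mul_exp_of_integrable_exp_mul
    (X := fun s : ℝ => 1 + |s|) (v := -c) (t := c / 2) (by positivity)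
    (hexp _ (by linarith)) (hexp _ (by linarith)) k
  refine (hpow.const_mul (exp c)).congr (Eventually.of_forall fun s => ?_)
  simp only [abs_of_nonneg (by positivity : 0 ≤ 1 + |s|)]
  rw [mul_left_comm, ← Real.exp_add]
  congr 2
  ring

section Logistic

variable {y v : ℝ → ℝ} {c : ℝ}

lemma antitone_logit_add_mul (hy : ∀ s, y s ∈ Ioo (0 : ℝ) 1)
    (hderiv : ∀ s, HasDerivAt y (v s) s) (hv : ∀ s, v s ≤ -(c * (y s * (1 - y s)))) :
    Antitone fun s => log (y s) - log (1 - y s) + c * s := by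
  refine antitone_of_hasDerivAt_nonpos (f' := fun s => (v s + c * (y s * (1 - y s))) /
    (y s * (1 - y s))) (fun s => ?_) fun s => ?_ <;>
  have hpos : 0 < y s := (hy s).1 <;>
  have hpos' : 0 < 1 - y s := sub_pos.2 (hy s).2
  · refine ((((hderiv s).log hpos.ne').sub (((hderiv s).const_sub 1).log hpos'.ne')).add
      ((hasDerivAt_id s).const_mul c)).congr_deriv ?_
    field_simp
    ring
  · exact div_nonpos_of_nonpos_of_nonneg (by linarith [hv s]) (by positivity)

lemma mul_one_sub_le_exp_neg_mul_abs (hy : ∀ s, y s ∈ Ioo (0 : ℝ) 1)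
    (hderiv : ∀ s, HasDerivAt y (v s) s) (hv : ∀ s, v s ≤ -(c * (y s * (1 - y s))))
    (h0 : y 0 = 1 / 2) (s : ℝ) : y s * (1 - y s) ≤ exp (-(c * |s|)) := by
  have hpos : 0 < y s := (hy s).1
  have hpos' : 0 < 1 - y s := sub_pos.2 (hy s).2
  have hlog : log (y s) ≤ 0 := Real.log_nonpos hpos.le (hy s).2.le
  have hlog' : log (1 - y s) ≤ 0 := Real.log_nonpos hpos'.le (by linarith)
  have hanti := antitone_logit_add_mul hy hderiv hv
  have hlogit0 : log (y 0) - log (1 - y 0) + c * 0 = 0 := by rw [h0]; norm_num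
  rw [← Real.log_le_iff_le_exp (mul_pos hpos hpos'), Real.log_mul hpos.ne' hpos'.ne']
  rcases le_total 0 s with hs | hs
  · have hlogit := hanti hs
    rw [abs_of_nonneg hs]
    linarith
  · have hlogit := hanti hs
    rw [abs_of_nonpos hs]
    linarith

end Logistic

end Preliminaries

section MomentDensity

/-- A positive probability density on `ℝ` with finite moments of all orders. It is applied to the
densities `-(Φ ∘ η)'` and `-(V ∘ η)'` of the transition layer. -/
structure IsMomentDensity (h : ℝ → ℝ) : Prop where
  pos : ∀ s, 0 < h s
  integrable_one_add_abs_pow_mul : ∀ k : ℕ, Integrable fun s => (1 + |s|) ^ k * h s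
  integral_eq_one : ∫ s, h s = 1

/-- The `m`-th moment of the radius `R + ε (s + τ)`, truncated at `0`, when `s` is distributed
with density `h`. In these terms `s` is the rescaled signed distance to the sphere of radius
`R + ε τ`. -/
def shellMoment (h : ℝ → ℝ) (R : ℝ) (m : ℕ) (ε τ : ℝ) : ℝ :=
  ∫ s, max (R + ε * (s + τ)) 0 ^ m * h s

lemma IsMomentDensity.of_hasDerivAt {f h : ℝ → ℝ} {c K : ℝ} (hpos : ∀ s, 0 < h s)
    (hf : ∀ s, HasDerivAt f (-h s) s) (hbot : Tendsto f atBot (nhds 1))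
    (htop : Tendsto f atTop (nhds 0)) (hc : 0 < c) (hdecay : ∀ s, h s ≤ K * exp (-(c * |s|))) :
    IsMomentDensity h := by
  have hmeas : Measurable h := by
    have hh : h = fun s => -deriv f s := funext fun s => by rw [(hf s).deriv, neg_neg]
    exact hh ▸ (measurable_deriv f).neg
  have hint : ∀ k : ℕ, Integrable fun s => (1 + |s|) ^ k * h s := fun k => by
    refine ((integrable_one_add_abs_pow_mul_exp_neg_mul_abs hc k).const_mul K).mono'
      (by fun_prop) (Eventually.of_forall fun s => ?_)
    have hs := hpos s
    rw [Real.norm_of_nonneg (by positivity), mul_left_comm]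
    gcongr
    exact hdecay s
  refine ⟨hpos, hint, ?_⟩
  have hFTC := integral_of_hasDerivAt_of_tendsto hf
    (show Integrable fun s => -h s by simpa using (hint 0).neg) hbot htop
  rw [integral_neg] at hFTC
  linarith

namespace IsMomentDensity

variable {h : ℝ → ℝ}

lemma integrable (hh : IsMomentDensity h) : Integrable h := by
  simpa using hh.integrable_one_add_abs_pow_mul 0

lemma norm_mul_le_of_abs_le (hh : IsMomentDensity h) {x A s : ℝ} {k : ℕ}
    (hx : |x| ≤ A * (1 + |s|) ^ k) : ‖x * h s‖ ≤ A * ((1 + |s|) ^ k * h s) := by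
  rw [norm_mul, Real.norm_eq_abs, Real.norm_of_nonneg (hh.pos s).le, ← mul_assoc]
  exact mul_le_mul_of_nonneg_right hx (hh.pos s).le

lemma integrable_mul_of_abs_le (hh : IsMomentDensity h) {F : ℝ → ℝ} (hF : Continuous F) {k : ℕ}
    {A : ℝ} (hle : ∀ s, |F s| ≤ A * (1 + |s|) ^ k) : Integrable fun s => F s * h s :=
  ((hh.integrable_one_add_abs_pow_mul k).const_mul A).mono'
    (hF.aestronglyMeasurable.mul hh.integrable.aestronglyMeasurable)
    (Eventually.of_forall fun s => hh.norm_mul_le_of_abs_le (hle s))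

lemma integrable_mul_id (hh : IsMomentDensity h) : Integrable fun s => h s * s := by
  simpa only [mul_comm, id] using
    hh.integrable_mul_of_abs_le continuous_id (k := 1) (A := 1) (by simp)

lemma integrable_max_zero_pow_mul (hh : IsMomentDensity h) (R : ℝ) (m : ℕ) (ε τ : ℝ) :
    Integrable fun s => max (R + ε * (s + τ)) 0 ^ m * h s :=
  hh.integrable_mul_of_abs_le (by fun_prop) (abs_max_zero_pow_le le_rfl R ε m)

lemma continuous_shellMoment (hh : IsMomentDensity h) (R : ℝ) (m : ℕ) (ε : ℝ) :
    Continuous (shellMoment h R m ε) := by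
  refine continuous_iff_continuousAt.2 fun τ₀ => continuousAt_of_dominated
    (bound := fun s => (|R| + |ε| * (1 + (|τ₀| + 1))) ^ m * ((1 + |s|) ^ m * h s))
    (Eventually.of_forall fun τ => (hh.integrable_max_zero_pow_mul R m ε τ).aestronglyMeasurable)
    ?_ ((hh.integrable_one_add_abs_pow_mul m).const_mul _)
    (Eventually.of_forall fun s => Continuous.continuousAt (by fun_prop))
  filter_upwards [continuous_abs.continuousAt.eventually_le_const (lt_add_one |τ₀|)] with τ hτ
  exact Eventually.of_forall fun s =>
    hh.norm_mul_le_of_abs_le (abs_max_zero_pow_le hτ R ε m s)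

lemma strictMono_shellMoment (hh : IsMomentDensity h) (R : ℝ) {m : ℕ} (hm : m ≠ 0) {ε : ℝ}
    (hε : 0 < ε) : StrictMono (shellMoment h R m ε) := by
  intro a b hab
  have hnonneg : ∀ s, 0 ≤ max (R + ε * (s + b)) 0 ^ m - max (R + ε * (s + a)) 0 ^ m := fun s =>
    sub_nonneg.2 (by gcongr)
  have hpos : ∀ s ∈ Ioi (-(R / ε) - a),
      0 < max (R + ε * (s + b)) 0 ^ m - max (R + ε * (s + a)) 0 ^ m := fun s hs => by
    have ha : 0 < R + ε * (s + a) := by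
      have hs' : -(R / ε) < s + a := by linarith [mem_Ioi.1 hs]
      rw [← neg_div, div_lt_iff₀ hε] at hs'
      linarith
    have hlt : R + ε * (s + a) < R + ε * (s + b) := by gcongr
    rw [max_eq_left ha.le, max_eq_left (ha.trans hlt).le]
    exact sub_pos.2 (pow_lt_pow_left₀ hlt ha.le hm)
  have hint := (hh.integrable_max_zero_pow_mul R m ε b).sub
    (hh.integrable_max_zero_pow_mul R m ε a)
  rw [← sub_pos, shellMoment, shellMoment, ← integral_sub (hh.integrable_max_zero_pow_mul R m ε b)
    (hh.integrable_max_zero_pow_mul R m ε a)]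
  simp only [← sub_mul]
  refine (integral_pos_iff_support_of_nonneg (fun s => mul_nonneg (hnonneg s) (hh.pos s).le)
    (by simpa only [sub_mul] using! hint)).2 ?_
  calc (0 : ENNReal) < volume (Ioi (-(R / ε) - a)) := by simp
    _ ≤ _ := measure_mono fun s hs => (mul_pos (hpos s hs) (hh.pos s)).ne'

lemma shellMoment_sub_taylor_eq_integral (hh : IsMomentDensity h) (R : ℝ) (m : ℕ) (ε τ : ℝ) :
    shellMoment h R m ε τ - R ^ m - m * R ^ (m - 1) * ε * ((∫ s, h s * s) + τ) =
      ∫ s, (max (R + ε * (s + τ)) 0 ^ m - R ^ m - m * R ^ (m - 1) * (ε * (s + τ))) * h s := by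
  have hsplit : ∀ s,
      (max (R + ε * (s + τ)) 0 ^ m - R ^ m - m * R ^ (m - 1) * (ε * (s + τ))) * h s =
      max (R + ε * (s + τ)) 0 ^ m * h s - ((R ^ m + m * R ^ (m - 1) * ε * τ) * h s
        + m * R ^ (m - 1) * ε * (h s * s)) := fun s => by ring
  have hconst := hh.integrable.const_mul (R ^ m + m * R ^ (m - 1) * ε * τ)
  have hlin := hh.integrable_mul_id.const_mul (m * R ^ (m - 1) * ε)
  have hconst_add_lin : Integrable fun s => (R ^ m + m * R ^ (m - 1) * ε * τ) * h s
      + m * R ^ (m - 1) * ε * (h s * s) := hconst.add hlin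
  simp_rw [hsplit]
  rw [integral_sub (hh.integrable_max_zero_pow_mul R m ε τ) hconst_add_lin,
    integral_add hconst hlin, integral_const_mul, integral_const_mul, hh.integral_eq_one,
    shellMoment]
  ring

lemma exists_abs_shellMoment_sub_taylor_le (hh : IsMomentDensity h) {R : ℝ} (hR : 0 < R) {m : ℕ}
    (hm : 1 ≤ m) (T : ℝ) : ∃ C > 0, ∀ ε τ : ℝ, 0 < ε → ε ≤ 1 → |τ| ≤ T →
      |shellMoment h R m ε τ - R ^ m - m * R ^ (m - 1) * ε * ((∫ s, h s * s) + τ)|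
        ≤ C * ε ^ 2 := by
  obtain ⟨K, hK, htaylor⟩ := exists_abs_max_zero_pow_rescaled_sub_taylor_le hR hm T
  have hmoment : 0 ≤ ∫ s, (1 + |s|) ^ (m + 2) * h s :=
    integral_nonneg fun s => mul_nonneg (by positivity) (hh.pos s).le
  refine ⟨K * (∫ s, (1 + |s|) ^ (m + 2) * h s) + 1, by positivity, fun ε τ hε hε1 hτ => ?_⟩
  rw [hh.shellMoment_sub_taylor_eq_integral, ← Real.norm_eq_abs]
  calc _ ≤ ∫ s, K * ε ^ 2 * ((1 + |s|) ^ (m + 2) * h s) :=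
        norm_integral_le_of_norm_le ((hh.integrable_one_add_abs_pow_mul _).const_mul _)
          (Eventually.of_forall fun s => hh.norm_mul_le_of_abs_le (htaylor ε τ s hε hε1 hτ))
    _ = K * (∫ s, (1 + |s|) ^ (m + 2) * h s) * ε ^ 2 := by rw [integral_const_mul]; ring
    _ ≤ (K * (∫ s, (1 + |s|) ^ (m + 2) * h s) + 1) * ε ^ 2 := by gcongr; linarith

lemma exists_abs_shellMoment_sub_taylor_le_of_abs_sub_le (hh : IsMomentDensity h) {R : ℝ}
    (hR : 0 < R) {m : ℕ} (hm : 1 ≤ m) (τ₀ : ℝ) {A : ℝ} (hA : 0 ≤ A) :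
    ∃ C > 0, ∀ ε τ : ℝ, 0 < ε → ε ≤ 1 → |τ - τ₀| ≤ A * ε →
      |shellMoment h R m ε τ - R ^ m - m * R ^ (m - 1) * ε * ((∫ s, h s * s) + τ₀)|
        ≤ C * ε ^ 2 := by
  obtain ⟨C, hC, hexpand⟩ := hh.exists_abs_shellMoment_sub_taylor_le hR hm (|τ₀| + A)
  refine ⟨C + m * R ^ (m - 1) * A, by positivity, fun ε τ hε hε1 hτ => ?_⟩
  have hτ_le : |τ| ≤ |τ₀| + A := by
    have hAε : A * ε ≤ A := mul_le_of_le_one_right hA hε1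
    linarith [abs_sub_abs_le_abs_sub τ τ₀]
  calc |shellMoment h R m ε τ - R ^ m - m * R ^ (m - 1) * ε * ((∫ s, h s * s) + τ₀)|
      = |(shellMoment h R m ε τ - R ^ m - m * R ^ (m - 1) * ε * ((∫ s, h s * s) + τ))
          + m * R ^ (m - 1) * ε * (τ - τ₀)| := by congr 1; ring
    _ ≤ C * ε ^ 2 + m * R ^ (m - 1) * ε * (A * ε) := by
        refine (abs_add_le _ _).trans (add_le_add (hexpand ε τ hε hε1 hτ_le) ?_)
        rw [abs_mul, abs_of_nonneg (by positivity)]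
        gcongr
    _ = (C + m * R ^ (m - 1) * A) * ε ^ 2 := by ring

lemma existsUnique_shellMoment_eq (hh : IsMomentDensity h) {R : ℝ} {m : ℕ} (hm : m ≠ 0) {ε : ℝ}
    (hε : 0 < ε) {a b v : ℝ} (ha : shellMoment h R m ε a ≤ v) (hb : v ≤ shellMoment h R m ε b) :
    ∃! τ, shellMoment h R m ε τ = v := by
  obtain ⟨τ, hτ⟩ := mem_range_of_exists_le_of_exists_ge (hh.continuous_shellMoment R m ε)
    ⟨a, ha⟩ ⟨b, hb⟩
  exact ⟨τ, hτ, fun τ' hτ' =>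
    (hh.strictMono_shellMoment R hm hε).injective (hτ'.trans hτ.symm)⟩

-- The linear term of the expansion is `± m * R ^ (m - 1) * ε` at `τ₀ ± 1`.
lemma exists_forall_shellMoment_lt_pow_lt (hh : IsMomentDensity h) {R : ℝ} (hR : 0 < R) {m : ℕ}
    (hm : 1 ≤ m) {τ₀ : ℝ} (hτ₀ : ∫ s, h s * s = -τ₀) :
    ∃ ε₀ ∈ Ioc (0 : ℝ) 1, ∀ ε, 0 < ε → ε < ε₀ →
      shellMoment h R m ε (τ₀ - 1) < R ^ m ∧ R ^ m < shellMoment h R m ε (τ₀ + 1) := by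
  obtain ⟨C, hC, hexpand⟩ := hh.exists_abs_shellMoment_sub_taylor_le hR hm (|τ₀| + 1)
  refine ⟨min 1 (m * R ^ (m - 1) / C), ⟨by positivity, min_le_left _ _⟩, fun ε hε hεlt => ?_⟩
  have hε1 : ε ≤ 1 := (hεlt.trans_le (min_le_left _ _)).le
  have hCε : C * ε ^ 2 < m * R ^ (m - 1) * ε := by
    have hlt := (lt_div_iff₀ hC).1 (hεlt.trans_le (min_le_right _ _))
    nlinarith
  have hlower := hexpand ε (τ₀ - 1) hε hε1 (by simpa using abs_sub τ₀ 1)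
  have hupper := hexpand ε (τ₀ + 1) hε hε1 (by simpa using abs_add_le τ₀ 1)
  rw [hτ₀] at hlower hupper
  exact ⟨by linarith [(abs_le.1 hlower).2], by linarith [(abs_le.1 hupper).1]⟩

lemma exists_forall_existsUnique_shellMoment_eq_pow (hh : IsMomentDensity h) {R : ℝ}
    (hR : 0 < R) {m : ℕ} (hm : 1 ≤ m) {τ₀ : ℝ} (hτ₀ : ∫ s, h s * s = -τ₀) :
    ∃ ε₀ ∈ Ioc (0 : ℝ) 1, ∃ C > 0, ∀ ε, 0 < ε → ε < ε₀ →
      (∃! τ, shellMoment h R m ε τ = R ^ m) ∧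
      ∀ τ, shellMoment h R m ε τ = R ^ m → |τ - τ₀| ≤ C * ε := by
  obtain ⟨ε₀, hε₀, hbracket⟩ := hh.exists_forall_shellMoment_lt_pow_lt hR hm hτ₀
  obtain ⟨C, hC, hexpand⟩ := hh.exists_abs_shellMoment_sub_taylor_le hR hm (|τ₀| + 1)
  have hslope : 0 < m * R ^ (m - 1) := by positivity
  refine ⟨ε₀, hε₀, C / (m * R ^ (m - 1)), by positivity, fun ε hε hεlt => ?_⟩
  obtain ⟨hlower, hupper⟩ := hbracket ε hε hεlt
  refine ⟨hh.existsUnique_shellMoment_eq (by omega) hε hlower.le hupper.le, fun τ hτ => ?_⟩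
  have hmono := hh.strictMono_shellMoment R (m := m) (by omega) hε
  have hτ_lower : τ₀ - 1 < τ := hmono.lt_iff_lt.1 (by rwa [hτ])
  have hτ_upper : τ < τ₀ + 1 := hmono.lt_iff_lt.1 (by rwa [hτ])
  have hτ_le : |τ| ≤ |τ₀| + 1 :=
    abs_le.2 ⟨by linarith [neg_abs_le τ₀], by linarith [le_abs_self τ₀]⟩
  have herror := hexpand ε τ hε (hεlt.le.trans hε₀.2) hτ_le
  rw [hτ, hτ₀, sub_self, zero_sub, abs_neg, abs_mul, abs_of_pos (mul_pos hslope hε),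
    neg_add_eq_sub] at herror
  rw [div_mul_eq_mul_div, le_div_iff₀ hslope]
  exact le_of_mul_le_mul_left (by linarith : ε * (|τ - τ₀| * (m * R ^ (m - 1))) ≤ ε * (C * ε)) hε

end IsMomentDensity

end MomentDensity

section RadialIntegrals

lemma lintegral_lintegral_Ioi_eq_lintegral_mul_measure_lt {α : Type*} [MeasurableSpace α]
    (μ : Measure α) [SFinite μ] {g : α → ℝ} (hg : Measurable g) {F : ℝ → ENNReal}
    (hF : Measurable F) :
    ∫⁻ x, (∫⁻ t in Ioi (g x), F t) ∂μ = ∫⁻ t, F t * μ {x | g x < t} := by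
  have hmeas : Measurable fun p : α × ℝ => (Ioi (g p.1)).indicator F p.2 :=
    (hF.comp measurable_snd).indicator
      (measurableSet_lt (hg.comp measurable_fst) measurable_snd)
  simp_rw [← lintegral_indicator measurableSet_Ioi]
  rw [lintegral_lintegral_swap hmeas.aemeasurable]
  refine lintegral_congr fun t => ?_
  rw [← lintegral_indicator_const (measurableSet_lt hg measurable_const)]
  rfl

lemma integral_comp_eq_integral_mul_measureReal_lt {α : Type*} [MeasurableSpace α]
    {μ : Measure α} [SFinite μ] {g : α → ℝ} (hg : Measurable g)
    (hfin : ∀ t, μ {x | g x < t} ≠ ⊤) {f h : ℝ → ℝ} (hf : ∀ s, HasDerivAt f (-h s) s)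
    (hh : ∀ s, 0 ≤ h s) (htop : Tendsto f atTop (nhds 0)) :
    ∫ x, f (g x) ∂μ = ∫ t, h t * μ.real {x | g x < t} := by
  have hderiv : ∀ s, HasDerivAt (fun s => -f s) (h s) s := fun s =>
    (hf s).fun_neg.congr_deriv (neg_neg _)
  have htop' : Tendsto (fun s => -f s) atTop (nhds 0) := by simpa using htop.neg
  have hf_eq : ∀ a, f a = ∫ t in Ioi a, h t := fun a => by
    rw [integral_Ioi_of_hasDerivAt_of_nonneg' (fun s _ => hderiv s) (fun s _ => hh s) htop',
      zero_sub, neg_neg]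
  have hf_nonneg : ∀ a, 0 ≤ f a := fun a => by
    rw [hf_eq]
    exact integral_nonneg hh
  have hf_lintegral : ∀ a, ENNReal.ofReal (f a) = ∫⁻ t in Ioi a, ENNReal.ofReal (h t) := by
    intro a
    rw [hf_eq, ofReal_integral_eq_lintegral_ofReal
      (integrableOn_Ioi_deriv_of_nonneg' (fun s _ => hderiv s) (fun s _ => hh s) htop')
      (Eventually.of_forall hh)]
  have hh_meas : Measurable h := by
    rw [← funext fun s => (hderiv s).deriv]
    exact measurable_deriv _
  have hf_meas : Measurable f :=
    (Differentiable.continuous fun s => (hf s).differentiableAt).measurable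
  have hlevel_meas : Measurable fun t => μ {x | g x < t} :=
    Monotone.measurable fun s t hst => measure_mono fun x hx => hx.trans_le hst
  rw [integral_eq_lintegral_of_nonneg_ae (Eventually.of_forall fun x => hf_nonneg _)
      (hf_meas.comp hg).aestronglyMeasurable,
    integral_eq_lintegral_of_nonneg_ae
      (Eventually.of_forall fun t => mul_nonneg (hh t) measureReal_nonneg)
      (hh_meas.mul hlevel_meas.ennreal_toReal).aestronglyMeasurable]
  simp_rw [hf_lintegral, ENNReal.ofReal_mul (hh _), ofReal_measureReal (hfin _)]
  rw [lintegral_lintegral_Ioi_eq_lintegral_mul_measure_lt μ hg hh_meas.ennreal_ofReal]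

variable {E : Type*} [NormedAddCommGroup E]

lemma setOf_norm_rescaled_lt_eq_ball {R ε : ℝ} (hε : 0 < ε) (τ t : ℝ) :
    {x : E | (‖x‖ - R) / ε - τ < t} = Metric.ball 0 (max (R + ε * (t + τ)) 0) := by
  ext x
  rw [mem_ofPred_eq, mem_ball_zero_iff, lt_max_iff, sub_lt_iff_lt_add, div_lt_iff₀ hε,
    or_iff_left (norm_nonneg x).not_gt, sub_lt_iff_lt_add', mul_comm]

variable [NormedSpace ℝ E]

lemma norm_fderiv_comp_norm_sub_div_sub [Nontrivial E] {f : ℝ → ℝ} {f' R ε τ : ℝ} {x : E}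
    (hx : DifferentiableAt ℝ (‖·‖) x) (hf : HasDerivAt f f' ((‖x‖ - R) / ε - τ)) :
    ‖fderiv ℝ (fun y : E => f ((‖y‖ - R) / ε - τ)) x‖ = |f'| * |ε|⁻¹ := by
  have hradius : HasDerivAt (fun r : ℝ => (r - R) / ε - τ) (1 / ε) ‖x‖ :=
    (((hasDerivAt_id ‖x‖).sub_const R).div_const ε).sub_const τ
  have hcomp := (hf.comp ‖x‖ hradius).comp_hasFDerivAt x hx.hasFDerivAt
  rw [show fderiv ℝ (fun y : E => f ((‖y‖ - R) / ε - τ)) x = _ from hcomp.fderiv, norm_smul,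
    norm_fderiv_norm hx, mul_one, norm_mul, Real.norm_eq_abs, Real.norm_eq_abs, one_div, abs_inv]

variable [FiniteDimensional ℝ E] [MeasurableSpace E] [BorelSpace E] (μ : Measure E)
  [μ.IsAddHaarMeasure] {R ε : ℝ}

lemma integral_comp_norm_rescaled_eq_measureReal_ball_mul_shellMoment [Nontrivial E]
    {f h : ℝ → ℝ} (hf : ∀ s, HasDerivAt f (-h s) s) (hh : ∀ s, 0 ≤ h s)
    (htop : Tendsto f atTop (nhds 0)) (hε : 0 < ε) (τ : ℝ) :
    ∫ x, f ((‖x‖ - R) / ε - τ) ∂μ =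
      μ.real (Metric.ball 0 1) * shellMoment h R (Module.finrank ℝ E) ε τ := by
  rw [integral_comp_eq_integral_mul_measureReal_lt (by fun_prop) (fun t => ?_) hf hh htop,
    shellMoment, ← integral_const_mul]
  · refine integral_congr_ae (Eventually.of_forall fun t => ?_)
    have hradius : 0 ≤ max (R + ε * (t + τ)) 0 := le_max_right _ _
    simp only [setOf_norm_rescaled_lt_eq_ball hε, measureReal_def,
      Measure.addHaar_ball μ 0 hradius, ENNReal.toReal_mul,
      ENNReal.toReal_ofReal (pow_nonneg hradius _)]
    ring
  · rw [setOf_norm_rescaled_lt_eq_ball hε]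
    exact Metric.isBounded_ball.measure_lt_top.ne

lemma shellMoment_eq_inv_mul_setIntegral_Ioi (g : ℝ → ℝ) {m : ℕ} (hm : m ≠ 0) (hε : 0 < ε)
    (τ : ℝ) : shellMoment g R m ε τ = ε⁻¹ * ∫ r in Ioi (0 : ℝ), r ^ m * g ((r - R) / ε - τ) := by
  have htrunc : ∫ r in Ioi (0 : ℝ), r ^ m * g ((r - R) / ε - τ) =
      ∫ r : ℝ, max r 0 ^ m * g ((r - R) / ε - τ) := by
    rw [← integral_indicator measurableSet_Ioi]
    congr 1 with r
    rcases lt_or_ge 0 r with hr | hr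
    · rw [indicator_of_mem (mem_Ioi.2 hr), max_eq_left hr.le]
    · rw [indicator_of_notMem (notMem_Ioi.2 hr), max_eq_right hr, zero_pow hm, zero_mul]
  have hscale := Measure.integral_comp_mul_left
    (fun r => max (R + ε * τ + r) 0 ^ m * g ((R + ε * τ + r - R) / ε - τ)) ε
  rw [htrunc, ← integral_add_left_eq_self _ (R + ε * τ), shellMoment, ← abs_of_pos (inv_pos.2 hε),
    ← smul_eq_mul, ← hscale]
  congr 1 with s
  congr 3
  · ring
  · field_simp
    ring

lemma integral_comp_norm_rescaled_eq_mul_shellMoment (g : ℝ → ℝ)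
    (hE : 2 ≤ Module.finrank ℝ E) (hε : 0 < ε) (τ : ℝ) :
    ∫ x, g ((‖x‖ - R) / ε - τ) ∂μ = Module.finrank ℝ E * μ.real (Metric.ball 0 1) * ε *
      shellMoment g R (Module.finrank ℝ E - 1) ε τ := by
  have : Nontrivial E := Module.nontrivial_of_finrank_pos (R := ℝ) (by omega)
  rw [integral_fun_norm_addHaar μ (fun r => g ((r - R) / ε - τ)),
    shellMoment_eq_inv_mul_setIntegral_Ioi g (by omega) hε]
  simp only [nsmul_eq_mul, smul_eq_mul]
  field_simp

end RadialIntegrals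

section Wells

/-- A normalized potential on `[0, 1]` whose only zeros are the wells `0` and `1`, of order between
`1` and `2`. The lower bound makes transition profiles `η` approach the wells exponentially fast,
and the upper bound passes this decay on to `W ∘ η`. -/
structure NondegenerateWell (W : ℝ → ℝ) : Prop where
  continuousOn : ContinuousOn W (Icc 0 1)
  exists_le_mul : ∃ K, ∀ t ∈ Icc (0 : ℝ) 1, W t ≤ K * (t * (1 - t))
  exists_mul_sq_le : ∃ a > 0, ∀ t ∈ Icc (0 : ℝ) 1, a * (t * (1 - t)) ^ 2 ≤ W t
  integral_sqrt : ∫ t in (0 : ℝ)..1, √(W t) = 1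

namespace DoubleWell

variable {W : ℝ → ℝ}

lemma nonneg (hW : DoubleWell W) {t : ℝ} (ht : t ∈ Icc (0 : ℝ) 1) : 0 ≤ W t := by
  rcases eq_endpoints_or_mem_Ioo_of_mem_Icc ht with rfl | rfl | ht
  · exact hW.zero_at_zero.ge
  · exact hW.zero_at_one.ge
  · exact (hW.pos_on t ht).le

lemma exists_le_mul (hW : DoubleWell W) :
    ∃ K, ∀ t ∈ Icc (0 : ℝ) 1, W t ≤ K * (t * (1 - t)) := by
  obtain ⟨L, hL⟩ := hW.contDiffOn.exists_lipschitzOnWith two_ne_zero (convex_Icc 0 1) isCompact_Icc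
  refine ⟨2 * L, fun t ht => ?_⟩
  have hleft : W t ≤ L * t := by
    simpa [hW.zero_at_zero, abs_of_nonneg (hW.nonneg ht), abs_of_nonneg ht.1] using
      hL.norm_sub_le ht (left_mem_Icc.2 zero_le_one)
  have hright : W t ≤ L * (1 - t) := by
    simpa [hW.zero_at_one, abs_of_nonneg (hW.nonneg ht), abs_sub_comm t 1,
      abs_of_nonneg (sub_nonneg.2 ht.2)] using hL.norm_sub_le ht (right_mem_Icc.2 zero_le_one)
  have hL0 := L.coe_nonneg
  rcases le_total t (1 / 2) with ht2 | ht2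
  · nlinarith [mul_nonneg hL0 ht.1]
  · nlinarith [mul_nonneg hL0 (sub_nonneg.2 ht.2)]

lemma exists_mul_sq_le_of_zero (hW : DoubleWell W) {t₀ : ℝ} (ht₀ : t₀ ∈ Icc (0 : ℝ) 1)
    (hzero : W t₀ = 0) (hpos : 0 < iteratedDerivWithin 2 W (Icc 0 1) t₀) :
    ∃ a > 0, ∀ᶠ t in nhdsWithin t₀ (Icc 0 1), a * (t - t₀) ^ 2 ≤ W t := by
  have hmin : IsLocalMinOn W (Icc 0 1) t₀ :=
    eventually_mem_nhdsWithin.mono fun t ht => hzero ▸ hW.nonneg ht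
  simpa only [hzero, zero_add] using
    exists_eventually_add_mul_sq_le_of_isLocalMinOn (convex_Icc 0 1) hW.contDiffOn ht₀ hmin hpos

lemma exists_mul_sq_le (hW : DoubleWell W) :
    ∃ a > 0, ∀ t ∈ Icc (0 : ℝ) 1, a * (t * (1 - t)) ^ 2 ≤ W t := by
  refine exists_pos_forall_mul_le_of_isCompact isCompact_Icc (fun t => sq_nonneg _)
    fun t₀ ht₀ => ?_
  rcases eq_endpoints_or_mem_Ioo_of_mem_Icc ht₀ with rfl | rfl | ht₀'
  · obtain ⟨a, ha, hloc⟩ := hW.exists_mul_sq_le_of_zero ht₀ hW.zero_at_zero hW.second_pos_zero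
    refine ⟨a, ha, ?_⟩
    filter_upwards [hloc, self_mem_nhdsWithin] with t hle ht
    have hsq : (t * (1 - t)) ^ 2 ≤ (t - 0) ^ 2 := by
      rw [sub_zero]
      exact pow_le_pow_left₀ (mul_nonneg ht.1 (sub_nonneg.2 ht.2)) (by nlinarith [ht.1]) 2
    exact (mul_le_mul_of_nonneg_left hsq ha.le).trans hle
  · obtain ⟨a, ha, hloc⟩ := hW.exists_mul_sq_le_of_zero ht₀ hW.zero_at_one hW.second_pos_one
    refine ⟨a, ha, ?_⟩
    filter_upwards [hloc, self_mem_nhdsWithin] with t hle ht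
    have hsq : (t * (1 - t)) ^ 2 ≤ (t - 1) ^ 2 := by
      rw [← neg_sq (t - 1), neg_sub]
      exact pow_le_pow_left₀ (mul_nonneg ht.1 (sub_nonneg.2 ht.2)) (by nlinarith [ht.2]) 2
    exact (mul_le_mul_of_nonneg_left hsq ha.le).trans hle
  · refine ⟨W t₀, hW.pos_on t₀ ht₀', ?_⟩
    have hcont : ContinuousWithinAt (fun t => W t - W t₀ * (t * (1 - t)) ^ 2) (Icc 0 1) t₀ :=
      (hW.contDiffOn.continuousOn t₀ ht₀).sub (by fun_prop)
    have hpos : 0 < W t₀ - W t₀ * (t₀ * (1 - t₀)) ^ 2 := by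
      have hsmall : (t₀ * (1 - t₀)) ^ 2 < 1 :=
        pow_lt_one₀ (mul_nonneg ht₀.1 (sub_nonneg.2 ht₀.2)) (by nlinarith [ht₀'.1, ht₀'.2])
          two_ne_zero
      nlinarith [hW.pos_on t₀ ht₀']
    exact (hcont.eventually_const_lt hpos).mono fun t ht => (sub_pos.1 ht).le

lemma nondegenerateWell (hW : DoubleWell W) : NondegenerateWell W :=
  ⟨hW.contDiffOn.continuousOn, hW.exists_le_mul, hW.exists_mul_sq_le, hW.normalized⟩

end DoubleWell

namespace NondegenerateWell

variable {W : ℝ → ℝ} {t : ℝ}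

lemma pos (hW : NondegenerateWell W) (ht : t ∈ Ioo (0 : ℝ) 1) : 0 < W t := by
  obtain ⟨a, ha, hle⟩ := hW.exists_mul_sq_le
  have hdist : 0 < t * (1 - t) := mul_pos ht.1 (sub_pos.2 ht.2)
  exact (by positivity : 0 < a * (t * (1 - t)) ^ 2).trans_le (hle t (Ioo_subset_Icc_self ht))

lemma continuousOn_sqrt (hW : NondegenerateWell W) : ContinuousOn (fun t => √(W t)) (Icc 0 1) :=
  hW.continuousOn.sqrt

lemma intervalIntegrable_sqrt (hW : NondegenerateWell W) (ht : t ∈ Icc (0 : ℝ) 1) :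
    IntervalIntegrable (fun s => √(W s)) volume 0 t :=
  (hW.continuousOn_sqrt.mono (Icc_subset_Icc_right ht.2)).intervalIntegrable_of_Icc ht.1

lemma hasDerivAt_Phi (hW : NondegenerateWell W) (ht : t ∈ Ioo (0 : ℝ) 1) :
    HasDerivAt (Phi W) (√(W t)) t := by
  have hcont : ContinuousOn (fun s => √(W s)) (Ioo 0 1) :=
    hW.continuousOn_sqrt.mono Ioo_subset_Icc_self
  exact intervalIntegral.integral_hasDerivAt_right
    (hW.intervalIntegrable_sqrt (Ioo_subset_Icc_self ht))
    (hcont.stronglyMeasurableAtFilter isOpen_Ioo t ht)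
    (hcont.continuousAt (isOpen_Ioo.mem_nhds ht))

lemma continuousOn_Phi (hW : NondegenerateWell W) : ContinuousOn (Phi W) (Icc 0 1) := by
  have hint : IntegrableOn (fun s => √(W s)) (uIcc 0 1) := by
    rw [uIcc_of_le zero_le_one]
    exact hW.continuousOn_sqrt.integrableOn_Icc
  simpa only [uIcc_of_le (zero_le_one' ℝ)] using!
    intervalIntegral.continuousOn_primitive_interval hint

lemma Phi_pos (hW : NondegenerateWell W) (ht : t ∈ Ioo (0 : ℝ) 1) : 0 < Phi W t :=
  intervalIntegral.intervalIntegral_pos_of_pos_on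
    (hW.intervalIntegrable_sqrt (Ioo_subset_Icc_self ht))
    (fun _ hs => Real.sqrt_pos.2 (hW.pos ⟨hs.1, hs.2.trans ht.2⟩)) ht.1

lemma Phi_le_one (hW : NondegenerateWell W) (ht : t ∈ Icc (0 : ℝ) 1) : Phi W t ≤ 1 :=
  (intervalIntegral.integral_mono_interval le_rfl ht.1 ht.2
    (Eventually.of_forall fun _ => Real.sqrt_nonneg _)
    (hW.intervalIntegrable_sqrt (right_mem_Icc.2 zero_le_one))).trans_eq hW.integral_sqrt

end NondegenerateWell

end Wells

section Profile

variable {W η : ℝ → ℝ}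

/-- The density `-(Φ ^ p ∘ η)' = p Φ(η) ^ (p - 1) W(η)`. For `p = 1` it is `W ∘ η`, the energy
density of the layer, and for `p = n / (n - 1)` it is `-(V ∘ η)'`. -/
def profileDensity (W η : ℝ → ℝ) (p s : ℝ) : ℝ :=
  p * Phi W (η s) ^ (p - 1) * W (η s)

lemma profileDensity_one : profileDensity W η 1 = fun s => W (η s) := by
  funext s
  simp [profileDensity]

lemma one_le_div_sub_one {x : ℝ} (hx : 1 < x) : 1 ≤ x / (x - 1) := by
  rw [one_le_div₀ (by linarith)]
  linarith

namespace TransitionProfile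

lemma tendsto_Phi_rpow_atBot (hW : NondegenerateWell W) (hη : TransitionProfile W η) (p : ℝ) :
    Tendsto (fun s => Phi W (η s) ^ p) atBot (nhds 1) := by
  have hη_within : Tendsto η atBot (nhdsWithin 1 (Icc 0 1)) :=
    tendsto_nhdsWithin_iff.2
      ⟨hη.tendsto_bot, Eventually.of_forall fun s => Ioo_subset_Icc_self (hη.mem s)⟩
  have hPhi := (hW.continuousOn_Phi 1 (right_mem_Icc.2 zero_le_one)).tendsto.comp hη_within
  rw [show Phi W 1 = 1 from hW.integral_sqrt] at hPhi
  simpa using! hPhi.rpow_const (p := p) (Or.inl one_ne_zero)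

lemma tendsto_Phi_rpow_atTop (hW : NondegenerateWell W) (hη : TransitionProfile W η) {p : ℝ}
    (hp : 0 < p) : Tendsto (fun s => Phi W (η s) ^ p) atTop (nhds 0) := by
  have hη_within : Tendsto η atTop (nhdsWithin 0 (Icc 0 1)) :=
    tendsto_nhdsWithin_iff.2
      ⟨hη.tendsto_top, Eventually.of_forall fun s => Ioo_subset_Icc_self (hη.mem s)⟩
  have hPhi := (hW.continuousOn_Phi 0 (left_mem_Icc.2 zero_le_one)).tendsto.comp hη_within
  rw [show Phi W 0 = 0 from intervalIntegral.integral_same] at hPhi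
  simpa [hp.ne'] using! hPhi.rpow_const (p := p) (Or.inr hp.le)

lemma hasDerivAt_Phi_rpow (hW : NondegenerateWell W) (hη : TransitionProfile W η) (p s : ℝ) :
    HasDerivAt (fun s => Phi W (η s) ^ p) (-profileDensity W η p s) s := by
  have hPhi := (hW.hasDerivAt_Phi (hη.mem s)).comp s (hη.ode s)
  refine (hPhi.rpow_const (p := p) (Or.inl (hW.Phi_pos (hη.mem s)).ne')).congr_deriv ?_
  have hsqrt : √(W (η s)) * √(W (η s)) = W (η s) := Real.mul_self_sqrt (hW.pos (hη.mem s)).le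
  simp only [profileDensity, Function.comp_apply]
  linear_combination (-(p * Phi W (η s) ^ (p - 1))) * hsqrt

lemma profileDensity_pos (hW : NondegenerateWell W) (hη : TransitionProfile W η) {p : ℝ}
    (hp : 0 < p) (s : ℝ) : 0 < profileDensity W η p s :=
  mul_pos (mul_pos hp (Real.rpow_pos_of_pos (hW.Phi_pos (hη.mem s)) _)) (hW.pos (hη.mem s))

lemma exists_mul_one_sub_le_exp (hW : NondegenerateWell W) (hη : TransitionProfile W η) :
    ∃ c > 0, ∀ s, η s * (1 - η s) ≤ exp (-(c * |s|)) := by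
  obtain ⟨a, ha, hlower⟩ := hW.exists_mul_sq_le
  refine ⟨√a, Real.sqrt_pos.2 ha, fun s =>
    mul_one_sub_le_exp_neg_mul_abs hη.mem hη.ode (fun s => neg_le_neg ?_) hη.init s⟩
  have hdist : 0 ≤ η s * (1 - η s) := mul_nonneg (hη.mem s).1.le (sub_nonneg.2 (hη.mem s).2.le)
  calc √a * (η s * (1 - η s)) = √(a * (η s * (1 - η s)) ^ 2) := by
        rw [Real.sqrt_mul ha.le, Real.sqrt_sq hdist]
    _ ≤ √(W (η s)) := Real.sqrt_le_sqrt (hlower _ (Ioo_subset_Icc_self (hη.mem s)))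

lemma profileDensity_le (hW : NondegenerateWell W) (hη : TransitionProfile W η) {p : ℝ}
    (hp : 1 ≤ p) (s : ℝ) : profileDensity W η p s ≤ p * W (η s) := by
  have hPhi : Phi W (η s) ^ (p - 1) ≤ 1 :=
    Real.rpow_le_one (hW.Phi_pos (hη.mem s)).le (hW.Phi_le_one (Ioo_subset_Icc_self (hη.mem s)))
      (sub_nonneg.2 hp)
  have hWη := (hW.pos (hη.mem s)).le
  calc profileDensity W η p s ≤ p * 1 * W (η s) := by rw [profileDensity]; gcongr
    _ = p * W (η s) := by rw [mul_one]

lemma isMomentDensity_profileDensity (hW : NondegenerateWell W) (hη : TransitionProfile W η)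
    {p : ℝ} (hp : 1 ≤ p) : IsMomentDensity (profileDensity W η p) := by
  have hp0 : 0 < p := one_pos.trans_le hp
  obtain ⟨c, hc, hdecay⟩ := hη.exists_mul_one_sub_le_exp hW
  obtain ⟨K, hupper⟩ := hW.exists_le_mul
  refine .of_hasDerivAt (hη.profileDensity_pos hW hp0) (hη.hasDerivAt_Phi_rpow hW p)
    (hη.tendsto_Phi_rpow_atBot hW p) (hη.tendsto_Phi_rpow_atTop hW hp0) hc (K := p * |K|)
    fun s => (hη.profileDensity_le hW hp s).trans ?_
  have hdist : 0 ≤ η s * (1 - η s) := mul_nonneg (hη.mem s).1.le (sub_nonneg.2 (hη.mem s).2.le)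
  calc p * W (η s) ≤ p * (K * (η s * (1 - η s))) := by
        gcongr
        exact hupper _ (Ioo_subset_Icc_self (hη.mem s))
    _ ≤ p * (|K| * exp (-(c * |s|))) := by
        gcongr
        exacts [le_abs_self K, hdecay s]
    _ = p * |K| * exp (-(c * |s|)) := (mul_assoc _ _ _).symm

lemma deriv_mul_derivWithin_Vpot (hW : NondegenerateWell W) (hη : TransitionProfile W η) (n : ℕ)
    (s : ℝ) : deriv η s * derivWithin (Vpot n W) (Icc 0 1) (η s) =
      -profileDensity W η (n / (n - 1)) s := by
  have hVpot : HasDerivAt (Vpot n W) _ (η s) :=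
    (hW.hasDerivAt_Phi (hη.mem s)).rpow_const (Or.inl (hW.Phi_pos (hη.mem s)).ne')
  rw [derivWithin_of_mem_nhds (Icc_mem_nhds (hη.mem s).1 (hη.mem s).2), mul_comm,
    (hη.ode s).deriv, hVpot.deriv]
  have hcomp := hVpot.comp s (hη.ode s)
  exact hcomp.unique (hη.hasDerivAt_Phi_rpow hW _ s)

lemma integral_Vpot_eq_ballVol_mul_shellMoment (hW : NondegenerateWell W)
    (hη : TransitionProfile W η) {n : ℕ} (hn : 2 ≤ n) (R : ℝ) {ε : ℝ} (hε : 0 < ε) (τ : ℝ) :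
    ∫ x : En n, Vpot n W (η ((‖x‖ - R) / ε - τ)) =
      ballVol n * shellMoment (profileDensity W η (n / (n - 1))) R n ε τ := by
  have hfinrank : Module.finrank ℝ (En n) = n := finrank_euclideanSpace_fin
  have : Nontrivial (En n) := Module.nontrivial_of_finrank_pos (R := ℝ) (by omega)
  have hp : 0 < (n : ℝ) / (n - 1) := one_pos.trans_le (one_le_div_sub_one (Nat.one_lt_cast.2 hn))
  have hvol := integral_comp_norm_rescaled_eq_measureReal_ball_mul_shellMoment (R := R)
    (volume : Measure (En n)) (hη.hasDerivAt_Phi_rpow hW (n / (n - 1)))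
    (fun s => (hη.profileDensity_pos hW hp s).le) (hη.tendsto_Phi_rpow_atTop hW hp) hε τ
  rwa [hfinrank] at hvol

lemma integral_norm_fderiv_sq (hW : NondegenerateWell W) (hη : TransitionProfile W η)
    {E : Type*} [NormedAddCommGroup E] [InnerProductSpace ℝ E] [MeasurableSpace E] (μ : Measure E)
    [NullSingletonClass μ] (R ε τ : ℝ) :
    ∫ x, ‖fderiv ℝ (fun y => η ((‖y‖ - R) / ε - τ)) x‖ ^ 2 ∂μ =
      ε⁻¹ ^ 2 * ∫ x, W (η ((‖x‖ - R) / ε - τ)) ∂μ := by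
  rw [← integral_const_mul]
  refine integral_congr_ae ?_
  filter_upwards [measure_eq_zero_iff_ae_notMem.1 (measure_singleton (μ := μ) 0)] with x hx
  have : Nontrivial E := nontrivial_of_ne x 0 hx
  have hnorm : DifferentiableAt ℝ (‖·‖) x :=
    (contDiffAt_norm ℝ hx (n := 1)).differentiableAt one_ne_zero
  rw [norm_fderiv_comp_norm_sub_div_sub hnorm (hη.ode _), abs_neg, mul_pow, sq_abs,
    Real.sq_sqrt (hW.pos (hη.mem _)).le, ← abs_inv, sq_abs, mul_comm]

lemma AC_eq_mul_shellMoment (hW : NondegenerateWell W) (hη : TransitionProfile W η) {n : ℕ}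
    (hn : 2 ≤ n) (R : ℝ) {ε : ℝ} (hε : 0 < ε) (τ : ℝ) :
    AC n W ε (fun x => η ((‖x‖ - R) / ε - τ)) =
      2 * n * ballVol n * shellMoment (fun s => W (η s)) R (n - 1) ε τ := by
  have hfinrank : Module.finrank ℝ (En n) = n := finrank_euclideanSpace_fin
  have : Nontrivial (En n) := Module.nontrivial_of_finrank_pos (R := ℝ) (by omega)
  have hpot := integral_comp_norm_rescaled_eq_mul_shellMoment (R := R) (volume : Measure (En n))
    (fun s => W (η s)) (by omega) hε τ
  rw [hfinrank] at hpot
  rw [AC, hη.integral_norm_fderiv_sq hW, hpot, ballVol, ← measureReal_def]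
  field_simp
  ring

end TransitionProfile

end Profile

section Expansion

lemma ballVol_pos (n : ℕ) : 0 < ballVol n :=
  ENNReal.toReal_pos (Metric.measure_ball_pos volume 0 one_pos).ne'
    Metric.isBounded_ball.measure_lt_top.ne

lemma R0_pos (n : ℕ) : 0 < R0 n :=
  Real.rpow_pos_of_pos (ballVol_pos n) _

lemma ballVol_mul_R0_pow {n k : ℕ} (hn : n ≠ 0) (hk : k ≤ n) :
    ballVol n * R0 n ^ (n - k) = ballVol n ^ ((k : ℝ) / n) := by
  have hω := ballVol_pos n
  calc ballVol n * R0 n ^ (n - k)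
      = ballVol n ^ (1 : ℝ) * ballVol n ^ (-(1 : ℝ) / n * (n - k : ℕ)) := by
        rw [R0, ← Real.rpow_natCast, ← Real.rpow_mul hω.le, Real.rpow_one]
    _ = ballVol n ^ ((k : ℝ) / n) := by
        rw [← Real.rpow_add hω, Nat.cast_sub hk]
        congr 1
        field_simp
        ring

variable {W η : ℝ → ℝ} {n : ℕ}

namespace TransitionProfile

lemma integral_Vpot_eq_one_iff (hW : NondegenerateWell W) (hη : TransitionProfile W η)
    (hn : 2 ≤ n) {ε : ℝ} (hε : 0 < ε) (τ : ℝ) :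
    ∫ x : En n, Vpot n W (η ((‖x‖ - R0 n) / ε - τ)) = 1 ↔
      shellMoment (profileDensity W η (n / (n - 1))) (R0 n) n ε τ = R0 n ^ n := by
  have hball : ballVol n * R0 n ^ n = 1 := by
    simpa using ballVol_mul_R0_pow (n := n) (k := 0) (by omega) (by omega)
  rw [hη.integral_Vpot_eq_ballVol_mul_shellMoment hW hn _ hε, ← hball,
    mul_right_inj' (ballVol_pos n).ne']

lemma abs_AC_sub_eq_mul_abs_shellMoment_sub (hW : NondegenerateWell W)
    (hη : TransitionProfile W η) (hn : 2 ≤ n) {ε : ℝ} (hε : 0 < ε) (τ T : ℝ) :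
    |AC n W ε (fun x => η ((‖x‖ - R0 n) / ε - τ)) - 2 * n * ballVol n ^ ((1 : ℝ) / n) -
        2 * n * (n - 1) * ballVol n ^ ((2 : ℝ) / n) * T * ε| =
      2 * n * ballVol n * |shellMoment (fun s => W (η s)) (R0 n) (n - 1) ε τ - R0 n ^ (n - 1) -
        (n - 1 : ℕ) * R0 n ^ (n - 1 - 1) * ε * T| := by
  have hperimeter := ballVol_mul_R0_pow (n := n) (k := 1) (by omega) (by omega)
  have hcurvature := ballVol_mul_R0_pow (n := n) (k := 2) (by omega) hn
  rw [Nat.cast_one] at hperimeter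
  rw [Nat.cast_ofNat] at hcurvature
  have hfactor : 0 ≤ 2 * n * ballVol n := by have := ballVol_pos n; positivity
  rw [hη.AC_eq_mul_shellMoment hW hn _ hε, ← hperimeter, ← hcurvature, Nat.sub_sub,
    Nat.cast_pred (by omega), ← abs_of_nonneg hfactor, ← abs_mul, abs_of_nonneg hfactor]
  ring_nf

end TransitionProfile

end Expansion

theorem statement6_general (n : ℕ) (hn : 2 ≤ n) (W : ℝ → ℝ) (hW : NondegenerateWell W)
    (η : ℝ → ℝ) (hη : TransitionProfile W η) :
    ∃ ε₀ > (0:ℝ), ∃ C > (0:ℝ), ∀ ε : ℝ, 0 < ε → ε < ε₀ →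
      (∃! τ : ℝ, (∫ x : En n, Vpot n W (η ((‖x‖ - R0 n) / ε - τ))) = 1) ∧
      ∀ τ : ℝ, (∫ x : En n, Vpot n W (η ((‖x‖ - R0 n) / ε - τ))) = 1 →
        |τ - (∫ s : ℝ, deriv η s * derivWithin (Vpot n W) (Icc 0 1) (η s) * s)| ≤ C * ε ∧
        |AC n W ε (fun x : En n => η ((‖x‖ - R0 n) / ε - τ))
            - 2 * (n : ℝ) * ballVol n ^ ((1 : ℝ) / (n : ℝ))
            - 2 * (n : ℝ) * ((n : ℝ) - 1) * ballVol n ^ ((2 : ℝ) / (n : ℝ)) *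
                ((∫ s : ℝ, deriv η s * derivWithin (Vpot n W) (Icc 0 1) (η s) * s)
                  + (∫ s : ℝ, W (η s) * s)) * ε|
          ≤ C * ε ^ 2 := by
  set τ₀ := ∫ s : ℝ, deriv η s * derivWithin (Vpot n W) (Icc 0 1) (η s) * s with hτ₀
  have hmean : ∫ s, profileDensity W η (n / (n - 1)) s * s = -τ₀ := by
    simp only [hτ₀, hη.deriv_mul_derivWithin_Vpot hW, neg_mul, integral_neg, neg_neg]
  have hvolume := hη.isMomentDensity_profileDensity hW (one_le_div_sub_one (Nat.one_lt_cast.2 hn))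
  have henergy := hη.isMomentDensity_profileDensity hW le_rfl
  rw [profileDensity_one] at henergy
  obtain ⟨ε₀, hε₀, C₀, hC₀, hτ⟩ :=
    hvolume.exists_forall_existsUnique_shellMoment_eq_pow (R0_pos n) (m := n) (by omega) hmean
  obtain ⟨C₁, hC₁, hexpand⟩ := henergy.exists_abs_shellMoment_sub_taylor_le_of_abs_sub_le
    (R0_pos n) (m := n - 1) (by omega) τ₀ hC₀.le
  have hω := ballVol_pos n
  refine ⟨ε₀, hε₀.1, C₀ + 2 * n * ballVol n * C₁, by positivity, fun ε hε hεlt => ?_⟩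
  simp only [hη.integral_Vpot_eq_one_iff hW hn hε,
    hη.abs_AC_sub_eq_mul_abs_shellMoment_sub hW hn hε]
  refine ⟨(hτ ε hε hεlt).1, fun τ hvol => ⟨?_, ?_⟩⟩
  · have hshift := (hτ ε hε hεlt).2 τ hvol
    exact hshift.trans (by gcongr; exact le_add_of_nonneg_right (by positivity))
  · have hbound := hexpand ε τ hε (hεlt.le.trans hε₀.2) ((hτ ε hε hεlt).2 τ hvol)
    rw [add_comm τ₀]
    calc _ ≤ 2 * n * ballVol n * (C₁ * ε ^ 2) := by gcongr
      _ ≤ _ := by rw [← mul_assoc]; gcongr; exact le_add_of_nonneg_left hC₀.le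

theorem statement6 (n : ℕ) (hn : 2 ≤ n) (W : ℝ → ℝ) (hW : DoubleWell W)
    (η : ℝ → ℝ) (hη : TransitionProfile W η) :
    ∃ ε₀ > (0:ℝ), ∃ C > (0:ℝ), ∀ ε : ℝ, 0 < ε → ε < ε₀ →
      (∃! τ : ℝ, (∫ x : En n, Vpot n W (η ((‖x‖ - R0 n) / ε - τ))) = 1) ∧
      ∀ τ : ℝ, (∫ x : En n, Vpot n W (η ((‖x‖ - R0 n) / ε - τ))) = 1 →
        |τ - (∫ s : ℝ, deriv η s * derivWithin (Vpot n W) (Icc 0 1) (η s) * s)| ≤ C * ε ∧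
        |AC n W ε (fun x : En n => η ((‖x‖ - R0 n) / ε - τ))
            - 2 * (n : ℝ) * ballVol n ^ ((1 : ℝ) / (n : ℝ))
            - 2 * (n : ℝ) * ((n : ℝ) - 1) * ballVol n ^ ((2 : ℝ) / (n : ℝ)) *
                ((∫ s : ℝ, deriv η s * derivWithin (Vpot n W) (Icc 0 1) (η s) * s)
                  + (∫ s : ℝ, W (η s) * s)) * ε|
          ≤ C * ε ^ 2 :=
  statement6_general n hn W hW.nondegenerateWell η hη
end
end
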